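/- The Taylor differential is a graded derivation of the Taylor product: for all subsets σ, τ ⊆ {1,…,k}, d(e_σ ⋆ e_τ) = d(e_σ) ⋆ e_τ + (−1)^{card(σ)} e_σ ⋆ d(e_τ), where ⋆ is extended O-bilinearly to C. -/

import Mathlib

/-- `A_τ`: the pointwise maximum of the exponent vectors `a i`, `i ∈ τ`
(so that `m_τ = x^{A_τ}` is the lcm of the monomials `φ_i = x^{a i}`, `i ∈ τ`). -/
def texp {n k : ℕ} (a : Fin k → Fin n → ℕ) (τ : Finset (Fin k)) : Fin n → ℕ :=
  fun v => τ.sup fun i => a i v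

/-- the monic monomial `x^f` with exponent vector `f`. -/
noncomputable def monOf (K : Type*) [Field K] {n : ℕ} (f : Fin n → ℕ) :
    MvPolynomial (Fin n) K :=
  MvPolynomial.monomial (Finsupp.equivFunOnFinite.symm f) 1

/-- the Taylor product on basis elements:
`e_σ ⋆ e_τ = (−1)^{card{(i,j)∈σ×τ : i>j}} (m_σ m_τ / m_{σ∪τ}) e_{σ∪τ}` if
`σ ∩ τ = ∅`, and `0` otherwise. -/
noncomputable def taylorStarBasis (K : Type*) [Field K] {n k : ℕ}
    (a : Fin k → Fin n → ℕ) (σ τ : Finset (Fin k)) :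
    Finset (Fin k) →₀ MvPolynomial (Fin n) K :=
  if σ ∩ τ = ∅ then
    ((-1 : MvPolynomial (Fin n) K) ^ ((σ ×ˢ τ).filter fun p => p.2 < p.1).card *
        monOf K fun v => texp a σ v + texp a τ v - texp a (σ ∪ τ) v) •
      Finsupp.single (σ ∪ τ) 1
  else 0

/-- the Taylor product, extended `O`-bilinearly. -/
noncomputable def taylorStar (K : Type*) [Field K] {n k : ℕ} (a : Fin k → Fin n → ℕ) :
    (Finset (Fin k) →₀ MvPolynomial (Fin n) K) →ₗ[MvPolynomial (Fin n) K]
      (Finset (Fin k) →₀ MvPolynomial (Fin n) K) →ₗ[MvPolynomial (Fin n) K]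
        (Finset (Fin k) →₀ MvPolynomial (Fin n) K) :=
  Finsupp.lsum (MvPolynomial (Fin n) K) fun σ =>
    LinearMap.toSpanSingleton (MvPolynomial (Fin n) K) _
      (Finsupp.lsum (MvPolynomial (Fin n) K) fun τ =>
        LinearMap.toSpanSingleton (MvPolynomial (Fin n) K) _ (taylorStarBasis K a σ τ))


/-- value of the Taylor differential on the basis element `e_τ`:
`d e_τ = Σ_{j∈τ} (−1)^{card{i∈τ : i<j}} x^{A_τ − A_{τ∖{j}}} e_{τ∖{j}}`. -/
noncomputable def taylorDval (K : Type*) [Field K] {n k : ℕ} (a : Fin k → Fin n → ℕ)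
    (τ : Finset (Fin k)) : Finset (Fin k) →₀ MvPolynomial (Fin n) K :=
  ∑ j ∈ τ, ((-1 : MvPolynomial (Fin n) K) ^ (τ.filter fun i => i < j).card *
      monOf K fun v => texp a τ v - texp a (τ.erase j) v) •
    Finsupp.single (τ.erase j) 1

/-- the Taylor differential `d`, extended `O`-linearly. -/
noncomputable def taylorD (K : Type*) [Field K] {n k : ℕ} (a : Fin k → Fin n → ℕ) :
    (Finset (Fin k) →₀ MvPolynomial (Fin n) K) →ₗ[MvPolynomial (Fin n) K]
      (Finset (Fin k) →₀ MvPolynomial (Fin n) K) :=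
  Finsupp.lsum (MvPolynomial (Fin n) K) fun τ =>
    LinearMap.toSpanSingleton (MvPolynomial (Fin n) K) _ (taylorDval K a τ)

theorem monOf_mul_aux (K : Type*) [Field K] {n : ℕ} (f g : Fin n → ℕ) :
    monOf K f * monOf K g = monOf K (fun v => f v + g v) := by
  unfold monOf
  rw [MvPolynomial.monomial_mul, one_mul]
  have h : (Finsupp.equivFunOnFinite.symm f + Finsupp.equivFunOnFinite.symm g : Fin n →₀ ℕ) =
      Finsupp.equivFunOnFinite.symm (fun v => f v + g v) := by
    ext v; simp
  rw [h]

theorem texp_mono_aux {n k : ℕ} (a : Fin k → Fin n → ℕ) {s t : Finset (Fin k)} (h : s ⊆ t)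
    (v : Fin n) : texp a s v ≤ texp a t v := Finset.sup_mono h

theorem texp_union_aux {n k : ℕ} (a : Fin k → Fin n → ℕ) (s t : Finset (Fin k))
    (v : Fin n) : texp a (s ∪ t) v ≤ texp a s v + texp a t v := by
  unfold texp
  rw [Finset.sup_union]
  exact sup_le (Nat.le_add_right _ _) (Nat.le_add_left _ _)

theorem inv_left_aux {k : ℕ} (σ τ : Finset (Fin k)) {j : Fin k} (hj : j ∈ σ) :
    ((σ ×ˢ τ).filter fun p => p.2 < p.1).card =
      (τ.filter fun i => i < j).card + (((σ.erase j) ×ˢ τ).filter fun p => p.2 < p.1).card := by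
  simp only [Finset.card_filter, Finset.sum_product]
  exact (Finset.add_sum_erase σ (fun x => ∑ y ∈ τ, if y < x then 1 else 0) hj).symm

theorem inv_right_aux {k : ℕ} (σ τ : Finset (Fin k)) {j : Fin k} (hj : j ∈ τ) :
    ((σ ×ˢ τ).filter fun p => p.2 < p.1).card =
      (σ.filter fun i => j < i).card + ((σ ×ˢ (τ.erase j)).filter fun p => p.2 < p.1).card := by
  simp only [Finset.card_filter, Finset.sum_product_right]
  exact (Finset.add_sum_erase τ (fun y => ∑ x ∈ σ, if y < x then 1 else 0) hj).symm

theorem card_split_mem_aux {k : ℕ} (σ : Finset (Fin k)) {j : Fin k} (hj : j ∈ σ) :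
    σ.card = (σ.filter fun i => i < j).card + (σ.filter fun i => j < i).card + 1 := by
  rw [← Finset.card_erase_add_one hj,
    ← Finset.card_filter_add_card_filter_not (s := σ.erase j) (fun i => i < j)]
  congr 3 <;> (ext x; simp only [Finset.mem_filter, Finset.mem_erase]; grind)

theorem card_split_aux {k : ℕ} (σ : Finset (Fin k)) {j : Fin k} (hj : j ∉ σ) :
    σ.card = (σ.filter fun i => i < j).card + (σ.filter fun i => j < i).card := by
  rw [← Finset.card_filter_add_card_filter_not (s := σ) (fun i => i < j)]
  congr 2; ext x; simp only [Finset.mem_filter]; grind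

theorem neg_pow_aux {R : Type*} [CommRing R] {p q : ℕ} (h : p % 2 = q % 2) :
    (-1 : R) ^ p = (-1) ^ q := by
  rw [neg_one_pow_eq_pow_mod_two, h, ← neg_one_pow_eq_pow_mod_two]

theorem star_single_aux (K : Type*) [Field K] {n k : ℕ} (a : Fin k → Fin n → ℕ)
    (σ τ : Finset (Fin k)) :
    taylorStar K a (Finsupp.single σ 1) (Finsupp.single τ 1) = taylorStarBasis K a σ τ := by
  simp [taylorStar]

theorem d_single_aux (K : Type*) [Field K] {n k : ℕ} (a : Fin k → Fin n → ℕ)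
    (σ : Finset (Fin k)) :
    taylorD K a (Finsupp.single σ 1) = taylorDval K a σ := by
  simp [taylorD]

theorem term_aux (K : Type*) [Field K] {n : ℕ} {p q r s : ℕ} {f g f' g' : Fin n → ℕ}
    (h : (p + q) % 2 = (r + s) % 2) (hf : ∀ v, f v + g v = f' v + g' v) :
    ((-1 : MvPolynomial (Fin n) K) ^ p * monOf K f) * ((-1) ^ q * monOf K g) =
      ((-1) ^ r * monOf K f') * ((-1) ^ s * monOf K g') := by
  rw [mul_mul_mul_comm, mul_mul_mul_comm _ (monOf K f'), ← pow_add, ← pow_add,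
    monOf_mul_aux, monOf_mul_aux, neg_pow_aux h]
  simp only [hf]

/-- the Taylor differential is a graded derivation of the
Taylor product: for all `σ, τ ⊆ {1,…,k}`,
`d(e_σ ⋆ e_τ) = d(e_σ) ⋆ e_τ + (−1)^{card σ} e_σ ⋆ d(e_τ)`. -/
theorem stmt_4 {K : Type*} [Field K] {n k : ℕ} (hn : 1 ≤ n) (hk : 1 ≤ k)
    (a : Fin k → Fin n → ℕ) (σ τ : Finset (Fin k)) :
    taylorD K a (taylorStar K a (Finsupp.single σ 1) (Finsupp.single τ 1)) =
      taylorStar K a (taylorD K a (Finsupp.single σ 1)) (Finsupp.single τ 1) +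
        (-1 : MvPolynomial (Fin n) K) ^ σ.card •
          taylorStar K a (Finsupp.single σ 1) (taylorD K a (Finsupp.single τ 1)) := by
  rw [star_single_aux, d_single_aux, d_single_aux]
  have h1 : taylorStar K a (taylorDval K a σ) (Finsupp.single τ 1) =
      ∑ j ∈ σ, ((-1 : MvPolynomial (Fin n) K) ^ (σ.filter fun i => i < j).card *
        monOf K fun v => texp a σ v - texp a (σ.erase j) v) •
          taylorStarBasis K a (σ.erase j) τ := by
    simp only [taylorDval, map_sum, map_smul, LinearMap.sum_apply, LinearMap.smul_apply,
      star_single_aux]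
  have h2 : taylorStar K a (Finsupp.single σ 1) (taylorDval K a τ) =
      ∑ j ∈ τ, ((-1 : MvPolynomial (Fin n) K) ^ (τ.filter fun i => i < j).card *
        monOf K fun v => texp a τ v - texp a (τ.erase j) v) •
          taylorStarBasis K a σ (τ.erase j) := by
    simp only [taylorDval, map_sum, map_smul, star_single_aux]
  rw [h1, h2]
  by_cases hd : σ ∩ τ = ∅
  · have hdj : Disjoint σ τ := Finset.disjoint_iff_inter_eq_empty.mpr hd
    rw [taylorStarBasis, if_pos hd, map_smul, d_single_aux, taylorDval,
      Finset.sum_union hdj, smul_add, Finset.smul_sum, Finset.smul_sum, Finset.smul_sum]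
    refine congrArg₂ (· + ·) ?_ ?_
    · refine Finset.sum_congr rfl fun j hj => ?_
      have hjt : j ∉ τ := Finset.disjoint_left.mp hdj hj
      have he : (σ ∪ τ).erase j = σ.erase j ∪ τ := by
        rw [Finset.erase_union_distrib, Finset.erase_eq_of_notMem hjt]
      have hi : σ.erase j ∩ τ = ∅ := by rw [Finset.erase_inter, hd, Finset.erase_empty]
      rw [taylorStarBasis, if_pos hi, he, smul_smul, smul_smul]
      refine congrArg₂ (· • ·) ?_ rfl
      apply term_aux
      · have e1 := inv_left_aux σ τ hj
        have e2 : ((σ ∪ τ).filter fun i => i < j).card =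
            (σ.filter fun i => i < j).card + (τ.filter fun i => i < j).card := by
          rw [Finset.filter_union, Finset.card_union_of_disjoint
            (Finset.disjoint_filter_filter hdj)]
        omega
      · intro v
        have m1 := texp_union_aux a σ τ v
        have m2 := texp_union_aux a (σ.erase j) τ v
        have m3 := texp_mono_aux a (Finset.erase_subset j σ) v
        have m4 := texp_mono_aux a (Finset.erase_subset j (σ ∪ τ)) v
        rw [he] at m4
        omega
    · refine Finset.sum_congr rfl fun j hj => ?_
      have hjs : j ∉ σ := Finset.disjoint_right.mp hdj hj
      have he : (σ ∪ τ).erase j = σ ∪ τ.erase j := by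
        rw [Finset.erase_union_distrib, Finset.erase_eq_of_notMem hjs]
      have hi : σ ∩ τ.erase j = ∅ := by rw [Finset.inter_erase, hd, Finset.erase_empty]
      rw [taylorStarBasis, if_pos hi, he, smul_smul, smul_smul, smul_smul, ← mul_assoc ((-1) ^ σ.card),
        ← pow_add]
      refine congrArg₂ (· • ·) ?_ rfl
      apply term_aux
      · have e1 := inv_right_aux σ τ hj
        have e2 : ((σ ∪ τ).filter fun i => i < j).card =
            (σ.filter fun i => i < j).card + (τ.filter fun i => i < j).card := by
          rw [Finset.filter_union, Finset.card_union_of_disjoint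
            (Finset.disjoint_filter_filter hdj)]
        have e3 := card_split_aux σ hjs
        omega
      · intro v
        have m1 := texp_union_aux a σ τ v
        have m2 := texp_union_aux a σ (τ.erase j) v
        have m3 := texp_mono_aux a (Finset.erase_subset j τ) v
        have m4 := texp_mono_aux a (Finset.erase_subset j (σ ∪ τ)) v
        rw [he] at m4
        omega
  · obtain ⟨j, hj⟩ := Finset.nonempty_iff_ne_empty.mpr hd
    obtain ⟨hs, ht⟩ := Finset.mem_inter.mp hj
    rw [taylorStarBasis, if_neg hd, map_zero, Finset.sum_eq_single_of_mem j hs,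
      Finset.sum_eq_single_of_mem j ht]
    · by_cases hi : (σ ∩ τ).erase j = ∅
      · have he1 : σ.erase j ∪ τ = σ ∪ τ := by
          ext x; simp only [Finset.mem_union, Finset.mem_erase]; grind
        have he2 : σ ∪ τ.erase j = σ ∪ τ := by
          ext x; simp only [Finset.mem_union, Finset.mem_erase]; grind
        rw [taylorStarBasis, taylorStarBasis, if_pos (by rw [Finset.erase_inter, hi]),
          if_pos (by rw [Finset.inter_erase, hi]), he1, he2, smul_smul, smul_smul, smul_smul,
          ← mul_assoc ((-1) ^ σ.card), ← pow_add, ← add_smul]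
        have hz : ∀ x y : MvPolynomial (Fin n) K, y = (-1) * x → 0 = x + y := by
          intro x y h; rw [h]; ring
        rw [← hz _ _ ?_, zero_smul]
        rw [← mul_assoc (-1), ← mul_assoc (-1), ← pow_succ']
        apply term_aux
        · have e1 := inv_left_aux σ (τ.erase j) hs
          have e2 := inv_right_aux (σ.erase j) τ ht
          have e3 := card_split_mem_aux σ hs
          have e4 : ((τ.erase j).filter fun i => i < j) = τ.filter fun i => i < j := by
            ext x; simp only [Finset.mem_filter, Finset.mem_erase]; grind
          have e5 : ((σ.erase j).filter fun i => j < i) = σ.filter fun i => j < i := by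
            ext x; simp only [Finset.mem_filter, Finset.mem_erase]; grind
          rw [e4] at e1
          rw [e5] at e2
          omega
        · intro v
          have m1 := texp_union_aux a (σ.erase j) τ v
          have m2 := texp_union_aux a σ (τ.erase j) v
          have m3 := texp_mono_aux a (Finset.erase_subset j τ) v
          have m4 := texp_mono_aux a (Finset.erase_subset j σ) v
          rw [he1] at m1
          rw [he2] at m2
          omega
      · rw [taylorStarBasis, taylorStarBasis, if_neg (by rwa [Finset.erase_inter]),
          if_neg (by rwa [Finset.inter_erase])]
        simp
    · intro b _ hb
      rw [taylorStarBasis, if_neg, smul_zero]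
      exact Finset.ne_empty_of_mem (Finset.mem_inter.mpr
        ⟨hs, Finset.mem_erase.mpr ⟨hb.symm, ht⟩⟩)
    · intro b _ hb
      rw [taylorStarBasis, if_neg, smul_zero]
      exact Finset.ne_empty_of_mem (Finset.mem_inter.mpr
        ⟨Finset.mem_erase.mpr ⟨hb.symm, hs⟩, ht⟩)
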